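/- (Corporate bond price formula verification.) Let σ_V > 0, ρ ∈ ℝ with |ρ| < 1, T ∈ ℝ, K > 0, α > 0, m > 0, n ≥ 0, let Σ_p : ℝ → ℝ be continuous, and let r : ℝ × (0,∞) → ℝ be an arbitrary function. For t < T set σ(t)² = ∫_{t}^{T} [σ_V² + 2ρσ_VΣ_p(u) + Σ_p(u)²] du (which is positive since |ρ| < 1 and σ_V > 0) and σ(t) = √(σ(t)²). Define, for V, p > 0 and t < T, C(V, p, t) = K·p + (α/(m+nα))·V·N(d̃₁) − K·p·N(d̃₂), where d̃₁ = (ln((V/(K·p))·(α/(m+nα))) + σ(t)²/2)/σ(t) and d̃₂ = d̃₁ − σ(t). Then C satisfies ∂C/∂t + (1/2)[σ_V²V² ∂²C/∂V² − 2ρσ_VΣ_p(t) V p ∂²C/∂V∂p + Σ_p(t)²p² ∂²C/∂p²] + r(t,p)·V ∂C/∂V + r(t,p)·p ∂C/∂p − r(t,p)·C = 0 at every point (V, p, t) with V, p > 0 and t < T. -/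

import Mathlib

/-- The standard normal cumulative distribution function
`N(x) = (2π)^{-1/2} ∫_{-∞}^{x} e^{-u²/2} du`. -/
noncomputable def stdNormalCDF (x : ℝ) : ℝ :=
  (Real.sqrt (2 * Real.pi))⁻¹ * ∫ u in Set.Iic x, Real.exp (-u ^ 2 / 2)

open MeasureTheory in
lemma gauss_integrable_aux : Integrable (fun u : ℝ => Real.exp (-u ^ 2 / 2)) := by
  have h := integrable_exp_neg_mul_sq (b := 1 / 2) (by norm_num)
  refine h.congr (Filter.Eventually.of_forall fun u => ?_)
  show Real.exp _ = Real.exp _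
  congr 1; ring

/-- The standard normal density. -/
noncomputable def stdPhi (x : ℝ) : ℝ := (Real.sqrt (2 * Real.pi))⁻¹ * Real.exp (-x ^ 2 / 2)

lemma hasDerivAt_stdNormalCDF (x : ℝ) : HasDerivAt stdNormalCDF (stdPhi x) x := by
  have hi := gauss_integrable_aux
  have hc : Continuous (fun u : ℝ => Real.exp (-u ^ 2 / 2)) := by fun_prop
  have h1 : stdNormalCDF = fun x => (Real.sqrt (2 * Real.pi))⁻¹ *
      ((∫ u in Set.Iic (0:ℝ), Real.exp (-u ^ 2 / 2)) + ∫ u in (0:ℝ)..x, Real.exp (-u ^ 2 / 2)) := by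
    funext y
    unfold stdNormalCDF
    rw [← intervalIntegral.integral_Iic_sub_Iic hi.integrableOn hi.integrableOn]
    ring
  rw [h1]
  exact ((intervalIntegral.integral_hasDerivAt_right (hc.intervalIntegrable _ _)
    (hc.stronglyMeasurableAtFilter _ _) hc.continuousAt).const_add _).const_mul _

lemma phi_key (A B s : ℝ) (hA : 0 < A) (hB : 0 < B) (hs : 0 < s) :
    A * stdPhi ((Real.log (A / B) + s ^ 2 / 2) / s)
      = B * stdPhi ((Real.log (A / B) + s ^ 2 / 2) / s - s) := by
  unfold stdPhi
  have e : -((Real.log (A / B) + s ^ 2 / 2) / s - s) ^ 2 / 2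
      = Real.log (A / B) + -((Real.log (A / B) + s ^ 2 / 2) / s) ^ 2 / 2 := by
    field_simp; ring
  rw [e, Real.exp_add, Real.exp_log (by positivity)]
  field_simp

lemma generic_deriv (A B s : ℝ → ℝ) (A' B' s' x : ℝ) (hA : 0 < A x) (hB : 0 < B x) (hs : 0 < s x)
    (dA : HasDerivAt A A' x) (dB : HasDerivAt B B' x) (ds : HasDerivAt s s' x) :
    HasDerivAt (fun y => B y + A y * stdNormalCDF ((Real.log (A y / B y) + s y ^ 2 / 2) / s y)
        - B y * stdNormalCDF ((Real.log (A y / B y) + s y ^ 2 / 2) / s y - s y))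
      (B' + A' * stdNormalCDF ((Real.log (A x / B x) + s x ^ 2 / 2) / s x)
        - B' * stdNormalCDF ((Real.log (A x / B x) + s x ^ 2 / 2) / s x - s x)
        + A x * stdPhi ((Real.log (A x / B x) + s x ^ 2 / 2) / s x) * s') x := by
  have dd := ((((dA.div dB hB.ne').log (div_pos hA hB).ne').add ((ds.pow 2).div_const 2)).div ds hs.ne')
  have h1 := (hasDerivAt_stdNormalCDF _).comp x dd
  have h2 := (hasDerivAt_stdNormalCDF _).comp x (dd.sub ds)
  have h := (dB.add (dA.mul h1)).sub (dB.mul h2)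
  have k := phi_key (A x) (B x) (s x) hA hB hs
  refine h.congr_deriv ?_
  simp only [Pi.add_apply, Pi.div_apply, Pi.sub_apply, Pi.pow_apply, Function.comp_apply] at *
  generalize stdPhi ((Real.log (A x / B x) + s x ^ 2 / 2) / s x) = f1 at *
  generalize stdPhi ((Real.log (A x / B x) + s x ^ 2 / 2) / s x - s x) = f2 at *
  generalize (_ : ℝ) / (s x ^ 2 : ℝ) = D
  linear_combination (D - s') * k

lemma s2_pos (σV ρ T : ℝ) (hσV : 0 < σV) (hρ : |ρ| < 1) (Sigp : ℝ → ℝ) (hSigp : Continuous Sigp)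
    (t : ℝ) (ht : t < T) :
    0 < ∫ u in t..T, (σV ^ 2 + 2 * ρ * σV * Sigp u + (Sigp u) ^ 2) := by
  apply intervalIntegral.intervalIntegral_pos_of_pos_on
  · exact Continuous.intervalIntegrable (by fun_prop) _ _
  · intro u _
    have h1 : ρ ^ 2 < 1 := by rw [sq_lt_one_iff_abs_lt_one]; exact hρ
    have : 0 < σV ^ 2 * (1 - ρ ^ 2) := mul_pos (by positivity) (by linarith)
    nlinarith [sq_nonneg (Sigp u + ρ * σV)]
  · exact ht


/-- Corporate bond price formula verification: the explicit formula satisfies the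
two-dimensional pricing PDE. -/
theorem corporate_bond_formula_verification (σV ρ T K α m n : ℝ)
    (hσV : 0 < σV) (hρ : |ρ| < 1) (hK : 0 < K) (hα : 0 < α) (hm : 0 < m) (hn : 0 ≤ n)
    (Sigp : ℝ → ℝ) (hSigp : Continuous Sigp)
    (r : ℝ → ℝ → ℝ)
    (s2 : ℝ → ℝ)
    (hs2 : ∀ t, s2 t = ∫ u in t..T, (σV ^ 2 + 2 * ρ * σV * Sigp u + (Sigp u) ^ 2))
    (C : ℝ → ℝ → ℝ → ℝ)
    (hC : ∀ V p t : ℝ, 0 < V → 0 < p → t < T →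
      C V p t = K * p
          + α / (m + n * α) * V * stdNormalCDF
              ((Real.log (V / (K * p) * (α / (m + n * α))) + s2 t / 2)
                / Real.sqrt (s2 t))
          - K * p * stdNormalCDF
              ((Real.log (V / (K * p) * (α / (m + n * α))) + s2 t / 2)
                  / Real.sqrt (s2 t)
                - Real.sqrt (s2 t))) :
    ∀ V p t : ℝ, 0 < V → 0 < p → t < T →
      deriv (fun τ => C V p τ) t
          + (1 / 2) * (σV ^ 2 * V ^ 2 * deriv (deriv (fun v => C v p t)) V
              - 2 * ρ * σV * Sigp t * V * p
                  * deriv (fun v => deriv (fun q => C v q t) p) V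
              + (Sigp t) ^ 2 * p ^ 2 * deriv (deriv (fun q => C V q t)) p)
          + r t p * V * deriv (fun v => C v p t) V
          + r t p * p * deriv (fun q => C V q t) p
          - r t p * C V p t = 0 := by
  intro V p t hV hp ht
  have ha : 0 < α / (m + n * α) := by positivity
  set a := α / (m + n * α) with ha_def
  clear_value a
  have hpos : ∀ τ, τ < T → 0 < s2 τ := fun τ hτ => by
    rw [hs2]; exact s2_pos σV ρ T hσV hρ Sigp hSigp τ hτ
  have hC' : ∀ V p t : ℝ, 0 < V → 0 < p → t < T →
      C V p t = K * p
        + a * V * stdNormalCDF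
            ((Real.log (a * V / (K * p)) + Real.sqrt (s2 t) ^ 2 / 2) / Real.sqrt (s2 t))
        - K * p * stdNormalCDF
            ((Real.log (a * V / (K * p)) + Real.sqrt (s2 t) ^ 2 / 2) / Real.sqrt (s2 t)
              - Real.sqrt (s2 t)) := by
    intro V p t hV hp ht
    rw [hC V p t hV hp ht, Real.sq_sqrt (hpos t ht).le,
      show V / (K * p) * a = a * V / (K * p) by ring]
  have hsp : 0 < Real.sqrt (s2 t) := Real.sqrt_pos.2 (hpos t ht)
  have hQ : Continuous fun u => σV ^ 2 + 2 * ρ * σV * Sigp u + (Sigp u) ^ 2 := by fun_prop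
  have ds2 : HasDerivAt s2 (-(σV ^ 2 + 2 * ρ * σV * Sigp t + (Sigp t) ^ 2)) t := by
    rw [funext hs2]
    exact intervalIntegral.integral_hasDerivAt_left (hQ.intervalIntegrable _ _)
      (hQ.stronglyMeasurableAtFilter _ _) hQ.continuousAt
  have dsq := ds2.sqrt (hpos t ht).ne'
  have dV : ∀ v q, 0 < v → 0 < q → HasDerivAt (fun v => C v q t)
      (a * stdNormalCDF ((Real.log (a * v / (K * q)) + Real.sqrt (s2 t) ^ 2 / 2)
        / Real.sqrt (s2 t))) v := by
    intro v q hv hq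
    have h := generic_deriv (fun v => a * v) (fun _ => K * q) (fun _ => Real.sqrt (s2 t))
      a 0 0 v (by positivity) (by positivity) hsp (by simpa using (hasDerivAt_id v).const_mul a)
      (hasDerivAt_const _ _) (hasDerivAt_const _ _)
    refine (h.congr_of_eventuallyEq ?_).congr_deriv (by ring)
    filter_upwards [lt_mem_nhds hv] with w hw
    exact hC' w q t hw hq ht
  have dP : ∀ v q, 0 < v → 0 < q → HasDerivAt (fun q => C v q t)
      (K - K * stdNormalCDF ((Real.log (a * v / (K * q)) + Real.sqrt (s2 t) ^ 2 / 2)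
        / Real.sqrt (s2 t) - Real.sqrt (s2 t))) q := by
    intro v q hv hq
    have h := generic_deriv (fun _ => a * v) (fun q => K * q) (fun _ => Real.sqrt (s2 t))
      0 K 0 q (by positivity) (by positivity) hsp (hasDerivAt_const _ _)
      (by simpa using (hasDerivAt_id q).const_mul K) (hasDerivAt_const _ _)
    refine (h.congr_of_eventuallyEq ?_).congr_deriv (by ring)
    filter_upwards [lt_mem_nhds hq] with w hw
    exact hC' v w t hv hw ht
  have dT : HasDerivAt (fun τ => C V p τ)
      (a * V * stdPhi ((Real.log (a * V / (K * p)) + Real.sqrt (s2 t) ^ 2 / 2)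
        / Real.sqrt (s2 t)) * (-(σV ^ 2 + 2 * ρ * σV * Sigp t + Sigp t ^ 2)
          / (2 * Real.sqrt (s2 t)))) t := by
    have h := generic_deriv (fun _ => a * V) (fun _ => K * p) (fun τ => Real.sqrt (s2 τ))
      0 0 _ t (by positivity) (by positivity) hsp (hasDerivAt_const _ _)
      (hasDerivAt_const _ _) dsq
    refine (h.congr_of_eventuallyEq ?_).congr_deriv (by ring)
    filter_upwards [gt_mem_nhds ht] with w hw
    exact hC' V p w hV hp hw
  have lV : HasDerivAt (fun v => Real.log (a * v / (K * p))) (1 / V) V := by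
    have h := (((hasDerivAt_id V).const_mul a).div_const (K * p)).log
      (by simp only [id]; positivity)
    refine h.congr_deriv ?_
    simp only [id]; field_simp
  have lP : HasDerivAt (fun q => Real.log (a * V / (K * q))) (-1 / p) p := by
    have h := ((hasDerivAt_const p (a * V)).div ((hasDerivAt_id p).const_mul K)
      (by simp only [id]; positivity)).log
      (by simp only [id, Pi.div_apply]; positivity)
    refine h.congr_deriv ?_
    simp only [id, Pi.div_apply]; field_simp; ring
  have dVV := (((hasDerivAt_stdNormalCDF _).comp V
    ((lV.add_const (Real.sqrt (s2 t) ^ 2 / 2)).div_const (Real.sqrt (s2 t)))).const_mul a)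
  have dPP := ((((hasDerivAt_stdNormalCDF _).comp p
    (((lP.add_const (Real.sqrt (s2 t) ^ 2 / 2)).div_const (Real.sqrt (s2 t))).sub_const
      (Real.sqrt (s2 t)))).const_mul K).const_sub K)
  have dVP := ((((hasDerivAt_stdNormalCDF _).comp V
    (((lV.add_const (Real.sqrt (s2 t) ^ 2 / 2)).div_const (Real.sqrt (s2 t))).sub_const
      (Real.sqrt (s2 t)))).const_mul K).const_sub K)
  have eVV := (dVV.congr_of_eventuallyEq (f₁ := deriv (fun v => C v p t)) (by
    filter_upwards [lt_mem_nhds hV] with w hw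
    exact (dV w p hw hp).deriv)).deriv
  have ePP := (dPP.congr_of_eventuallyEq (f₁ := deriv (fun q => C V q t)) (by
    filter_upwards [lt_mem_nhds hp] with w hw
    exact (dP V w hV hw).deriv)).deriv
  have eVP := (dVP.congr_of_eventuallyEq (f₁ := fun v => deriv (fun q => C v q t) p) (by
    filter_upwards [lt_mem_nhds hV] with w hw
    exact (dP w p hw hp).deriv)).deriv
  rw [eVV, ePP, eVP, dT.deriv, (dV V p hV hp).deriv, (dP V p hV hp).deriv, hC' V p t hV hp ht]
  have k := phi_key (a * V) (K * p) (Real.sqrt (s2 t)) (by positivity) (by positivity) hsp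
  generalize stdPhi ((Real.log (a * V / (K * p)) + Real.sqrt (s2 t) ^ 2 / 2)
    / Real.sqrt (s2 t)) = f1 at *
  generalize stdPhi ((Real.log (a * V / (K * p)) + Real.sqrt (s2 t) ^ 2 / 2)
    / Real.sqrt (s2 t) - Real.sqrt (s2 t)) = f2 at *
  generalize stdNormalCDF ((Real.log (a * V / (K * p)) + Real.sqrt (s2 t) ^ 2 / 2)
    / Real.sqrt (s2 t)) = N1 at *
  generalize stdNormalCDF ((Real.log (a * V / (K * p)) + Real.sqrt (s2 t) ^ 2 / 2)
    / Real.sqrt (s2 t) - Real.sqrt (s2 t)) = N2 at *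
  generalize Real.sqrt (s2 t) = s at *
  have hs0 := hsp.ne'
  have hf : f2 = a * V * f1 / (K * p) := by field_simp; linarith
  rw [hf]
  field_simp
  ring
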